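/- Let l_1,…,l_n and r_1,…,r_n be d-dimensional bit vectors and let ℓ ≥ 1, p ∈ {0,1}, q ≥ 0 be integers, and let G = G_{L,R,ℓ,p,q}. For every 1 ≤ i ≤ n and 1 ≤ j ≤ n, every path in G from u_i^L to u_j^R contains entirely (as a subpath) at least one of the paths π(y^L,y^R), π(w_1^L,w_1^R), …, π(w_d^L,w_d^R). -/

import Mathlib

namespace GraphOV

/-- Two bit vectors (functions into `Fin 2`) are orthogonal if in every coordinate
at least one of them is `0`. -/
def Orth {d : ℕ} (a b : Fin d → Fin 2) : Prop := ∀ k, a k = 0 ∨ b k = 0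

/-- A system of internally disjoint paths joining exterior vertices from `E`:
for each path name `i : ι` we record its two endpoints and its length. -/
structure PathSys (E : Type) (ι : Type) where
  src : ι → E
  dst : ι → E
  len : ι → ℕ

namespace PathSys

variable {E ι : Type}

/-- Endpoints of zero-length paths get identified. -/
def idRel (S : PathSys E ι) (a b : E) : Prop :=
  ∃ i, S.len i = 0 ∧ S.src i = a ∧ S.dst i = b

/-- Vertices of the glued graph: exterior vertices (up to identification) together
with, for each path of length `m`, fresh interior vertices at positions `1,…,m-1`. -/
def Vert (S : PathSys E ι) : Type :=
  Quot S.idRel ⊕ Σ i : ι, {t : ℕ // 0 < t ∧ t < S.len i}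

/-- The vertex corresponding to an exterior vertex. -/
def ext (S : PathSys E ι) (a : E) : S.Vert := Sum.inl (Quot.mk _ a)

/-- The `t`-th vertex on the path named `i` (for `0 ≤ t ≤ S.len i`). -/
def pt (S : PathSys E ι) (i : ι) (t : ℕ) : S.Vert :=
  if h : 0 < t ∧ t < S.len i then Sum.inr ⟨i, t, h⟩
  else if t = 0 then S.ext (S.src i) else S.ext (S.dst i)

/-- The glued graph: consecutive vertices on each path are adjacent. -/
def graph (S : PathSys E ι) : SimpleGraph S.Vert :=
  SimpleGraph.fromRel fun a b =>
    ∃ i t, t + 1 ≤ S.len i ∧ a = S.pt i t ∧ b = S.pt i (t + 1)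

/-- The set of vertices lying on the path named `i`. -/
def onPath (S : PathSys E ι) (i : ι) : Set S.Vert :=
  {v | ∃ t ≤ S.len i, v = S.pt i t}

/-- A walk in the glued graph contains the path named `i` entirely if all vertices of
that path occur consecutively (in forward or backward order) on the walk. -/
def WalkContainsPath (S : PathSys E ι) {x y : S.Vert} (W : S.graph.Walk x y) (i : ι) : Prop :=
  ∃ a, a + S.len i ≤ W.length ∧
    ((∀ t ≤ S.len i, W.getVert (a + t) = S.pt i t) ∨
     (∀ t ≤ S.len i, W.getVert (a + t) = S.pt i (S.len i - t)))

end PathSys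

/-- The exterior vertices of the graph `G_{L,R,ℓ,p,q}`. -/
inductive Ext (n d : ℕ) : Type
  | uL : Fin n → Ext n d
  | uR : Fin n → Ext n d
  | vL : Fin n → Ext n d
  | vR : Fin n → Ext n d
  | wL : Fin d → Ext n d
  | wR : Fin d → Ext n d
  | xL : Ext n d
  | xR : Ext n d
  | yL : Ext n d
  | yR : Ext n d

/-- Names for the paths of the graph `G_{L,R,ℓ,p,q}`. -/
inductive Idx (n d : ℕ) (l r : Fin n → Fin d → Fin 2) : Type
  | uvL : Fin n → Idx n d l r
  | uvR : Fin n → Idx n d l r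
  | vxL : Fin n → Idx n d l r
  | vxR : Fin n → Idx n d l r
  | vwL : (i : Fin n) → (k : Fin d) → l i k = 1 → Idx n d l r
  | vwR : (j : Fin n) → (k : Fin d) → r j k = 1 → Idx n d l r
  | ywL : Fin d → Idx n d l r
  | ywR : Fin d → Idx n d l r
  | ww : Fin d → Idx n d l r
  | xyL : Idx n d l r
  | xyR : Idx n d l r
  | yy : Idx n d l r

/-- The path system defining the graph `G_{L,R,ℓ,p,q}`. -/
def sys (n d : ℕ) (l r : Fin n → Fin d → Fin 2) (ℓ p q : ℕ) :
    PathSys (Ext n d) (Idx n d l r) where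
  src := fun i => match i with
    | .uvL i => .uL i
    | .uvR i => .uR i
    | .vxL i => .vL i
    | .vxR i => .vR i
    | .vwL i _ _ => .vL i
    | .vwR j _ _ => .vR j
    | .ywL _ => .yL
    | .ywR _ => .yR
    | .ww k => .wL k
    | .xyL => .xL
    | .xyR => .xR
    | .yy => .yL
  dst := fun i => match i with
    | .uvL i => .vL i
    | .uvR i => .vR i
    | .vxL _ => .xL
    | .vxR _ => .xR
    | .vwL _ k _ => .wL k
    | .vwR _ k _ => .wR k
    | .ywL k => .wL k
    | .ywR k => .wR k
    | .ww k => .wR k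
    | .xyL => .yL
    | .xyR => .yR
    | .yy => .yR
  len := fun i => match i with
    | .uvL _ => ℓ - p
    | .uvR _ => ℓ - p
    | .vxL _ => ℓ
    | .vxR _ => ℓ
    | .vwL _ _ _ => ℓ
    | .vwR _ _ _ => ℓ
    | .ywL _ => ℓ
    | .ywR _ => ℓ
    | .ww _ => q
    | .xyL => ℓ - p
    | .xyR => ℓ - p
    | .yy => p + q

/-- The set `P_i^L`. -/
def PL (n d : ℕ) (l r : Fin n → Fin d → Fin 2) (ℓ p q : ℕ) (i : Fin n) :
    Set (sys n d l r ℓ p q).Vert :=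
  (sys n d l r ℓ p q).onPath (.uvL i) ∪
    ((sys n d l r ℓ p q).onPath (.vxL i) \ {(sys n d l r ℓ p q).ext .xL}) ∪
    ⋃ (k : Fin d) (h : l i k = 1),
      ((sys n d l r ℓ p q).onPath (.vwL i k h) \ {(sys n d l r ℓ p q).ext (.wL k)})

/-- The set `P_j^R`. -/
def PR (n d : ℕ) (l r : Fin n → Fin d → Fin 2) (ℓ p q : ℕ) (j : Fin n) :
    Set (sys n d l r ℓ p q).Vert :=
  (sys n d l r ℓ p q).onPath (.uvR j) ∪
    ((sys n d l r ℓ p q).onPath (.vxR j) \ {(sys n d l r ℓ p q).ext .xR}) ∪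
    ⋃ (k : Fin d) (h : r j k = 1),
      ((sys n d l r ℓ p q).onPath (.vwR j k h) \ {(sys n d l r ℓ p q).ext (.wR k)})

/-- The set `V^L`. -/
def VL (n d : ℕ) (l r : Fin n → Fin d → Fin 2) (ℓ p q : ℕ) :
    Set (sys n d l r ℓ p q).Vert := ⋃ i : Fin n, PL n d l r ℓ p q i

/-- The set `V^R`. -/
def VR (n d : ℕ) (l r : Fin n → Fin d → Fin 2) (ℓ p q : ℕ) :
    Set (sys n d l r ℓ p q).Vert := ⋃ j : Fin n, PR n d l r ℓ p q j

/-- The set `V^M` of all remaining vertices. -/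
def VM (n d : ℕ) (l r : Fin n → Fin d → Fin 2) (ℓ p q : ℕ) :
    Set (sys n d l r ℓ p q).Vert := (VL n d l r ℓ p q ∪ VR n d l r ℓ p q)ᶜ

namespace PathSys

theorem pt_int {E ι : Type} (S : PathSys E ι) (i : ι) (t : ℕ) (h : 0 < t ∧ t < S.len i) :
    S.pt i t = Sum.inr ⟨i, t, h⟩ := by
  exact dif_pos h

theorem pt_ext {E ι : Type} (S : PathSys E ι) (i : ι) (t : ℕ) (h : ¬ (0 < t ∧ t < S.len i)) :
    S.pt i t = if t = 0 then S.ext (S.src i) else S.ext (S.dst i) := by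
  exact dif_neg h

theorem pt_zero {E ι : Type} (S : PathSys E ι) (i : ι) : S.pt i 0 = S.ext (S.src i) := by
  simp [pt]

theorem pt_inj {E ι : Type} (S : PathSys E ι) (i j : ι) (s t : ℕ) (h : 0 < s ∧ s < S.len i)
    (e : S.pt i s = S.pt j t) : i = j ∧ s = t := by
  by_cases h' : 0 < t ∧ t < S.len j
  · rw [pt_int S i s h, pt_int S j t h'] at e
    have e2 := Sum.inr.inj e
    have e3 := congrArg Sigma.fst e2
    have e4 := congrArg (fun x : (Σ i : ι, {t : ℕ // 0 < t ∧ t < S.len i}) => x.2.1) e2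
    exact ⟨e3, e4⟩
  · rw [pt_int S i s h] at e
    rw [pt_ext S j t h'] at e
    split_ifs at e <;> exact absurd e (by simp [ext])

theorem adj_int {E ι : Type} (S : PathSys E ι) (i : ι) (s : ℕ) (h : 0 < s ∧ s < S.len i)
    (v : S.Vert) (hv : S.graph.Adj (S.pt i s) v) : v = S.pt i (s - 1) ∨ v = S.pt i (s + 1) := by
  unfold graph at hv
  rw [SimpleGraph.fromRel_adj] at hv
  obtain ⟨-, ⟨j, t, ht, e1, e2⟩ | ⟨j, t, ht, e1, e2⟩⟩ := hv
  · obtain ⟨rfl, rfl⟩ := pt_inj S _ _ _ _ h e1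
    exact Or.inr e2
  · obtain ⟨rfl, rfl⟩ := pt_inj S _ _ _ _ h e2
    left
    simpa using e1

/-- A path that enters the path `i` from its source and ends at an exterior vertex
follows it to its end. -/
theorem follow {E ι : Type} (S : PathSys E ι) (i : ι) {x : S.Vert} {b : E}
    (W : S.graph.Walk x (S.ext b)) (hW : W.IsPath) (T : ℕ) (hT : T + 1 ≤ W.length)
    (h0 : W.getVert T = S.pt i 0) (h1 : W.getVert (T + 1) = S.pt i 1) (hl : 1 ≤ S.len i) :
    S.WalkContainsPath W i := by
  have key : ∀ s, s + 1 ≤ S.len i → T + (s + 1) ≤ W.length ∧ W.getVert (T + s) = S.pt i s ∧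
      W.getVert (T + (s + 1)) = S.pt i (s + 1) := by
    intro s
    induction s with
    | zero => intro _; exact ⟨hT, h0, h1⟩
    | succ s ih =>
      intro hs
      obtain ⟨a1, a2, a3⟩ := ih (by omega)
      have hlt : T + (s + 1) < W.length := by
        rcases Nat.lt_or_ge (T + (s + 1)) W.length with h | h
        · exact h
        · rw [W.getVert_of_length_le h, pt_int S i (s + 1) (by omega)] at a3
          exact absurd a3 (by simp [ext])
      have hadj := W.adj_getVert_succ hlt
      rw [a3] at hadj
      refine ⟨by omega, a3, ?_⟩
      rcases adj_int S i (s + 1) (by omega) _ hadj with h | h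
      · exfalso
        simp only [Nat.add_sub_cancel] at h
        rw [← a2] at h
        have := hW.getVert_injOn (by simp; omega) (by simp; omega) h
        omega
      · exact h
  refine ⟨T, ?_, Or.inl ?_⟩
  · have := (key (S.len i - 1) (by omega)).1
    omega
  · intro t ht
    rcases t with _ | t
    · exact h0
    · exact (key t ht).2.2

theorem contains_zero {E ι : Type} (S : PathSys E ι) (i : ι) {x y : S.Vert}
    (W : S.graph.Walk x y) (T : ℕ) (hT : T ≤ W.length) (hl : S.len i = 0)
    (h0 : W.getVert T = S.ext (S.dst i)) : S.WalkContainsPath W i := by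
  refine ⟨T, by omega, Or.inl ?_⟩
  intro t ht
  obtain rfl : t = 0 := by omega
  rw [pt_zero, Nat.add_zero, h0]
  exact congrArg Sum.inl (Quot.sound ⟨i, hl, rfl, rfl⟩).symm

end PathSys

/-- Exterior vertices that are on the left (or identified with such). -/
def LeftE (p q : ℕ) {n d : ℕ} : Ext n d → Prop
  | .uL _ => True
  | .uR _ => False
  | .vL _ => True
  | .vR _ => False
  | .wL _ => True
  | .wR _ => q = 0
  | .xL => True
  | .xR => False
  | .yL => True
  | .yR => p + q = 0

def LeftI {n d : ℕ} {l r : Fin n → Fin d → Fin 2} : Idx n d l r → Prop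
  | .uvL _ => True
  | .vxL _ => True
  | .vwL _ _ _ => True
  | .ywL _ => True
  | .xyL => True
  | _ => False

theorem LeftE_resp {n d ℓ p q : ℕ} (hℓ : 1 ≤ ℓ) {l r : Fin n → Fin d → Fin 2} (a b : Ext n d)
    (h : (sys n d l r ℓ p q).idRel a b) : LeftE p q a = LeftE p q b := by
  obtain ⟨i, h0, rfl, rfl⟩ := h
  cases i <;> simp [sys, LeftE] at h0 ⊢ <;> omega

/-- Vertices on the left. -/
def LeftV {n d ℓ p q : ℕ} (hℓ : 1 ≤ ℓ) {l r : Fin n → Fin d → Fin 2} :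
    (sys n d l r ℓ p q).Vert → Prop
  | Sum.inl a => Quot.lift (LeftE p q) (LeftE_resp hℓ) a
  | Sum.inr x => LeftI x.1

theorem LeftV_pt {n d ℓ p q : ℕ} (hℓ : 1 ≤ ℓ) {l r : Fin n → Fin d → Fin 2}
    (i : Idx n d l r) (t : ℕ) (ht : t ≤ (sys n d l r ℓ p q).len i) :
    (LeftV hℓ ((sys n d l r ℓ p q).pt i t) ↔ 
      (0 < t ∧ t < (sys n d l r ℓ p q).len i ∧ LeftI i) ∨
      (t = 0 ∧ LeftE p q ((sys n d l r ℓ p q).src i)) ∨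
      (0 < t ∧ t = (sys n d l r ℓ p q).len i ∧ LeftE p q ((sys n d l r ℓ p q).dst i))) := by
  by_cases h : 0 < t ∧ t < (sys n d l r ℓ p q).len i
  · rw [PathSys.pt_int _ _ _ h]
    show LeftI i ↔ _
    have h1 : t ≠ 0 := by omega
    have h2 : t ≠ (sys n d l r ℓ p q).len i := by omega
    simp [h, h1, h2]
  · rw [PathSys.pt_ext _ _ _ h]
    split_ifs with h1
    · show LeftE p q _ ↔ _
      subst h1
      simp
    · show LeftE p q _ ↔ _
      have h2 : 0 < t := by omega
      have h3 : t = (sys n d l r ℓ p q).len i := by omega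
      rw [← h3]
      simp [h1, h2]

theorem pt_end {E ι : Type} (S : PathSys E ι) (i : ι) (t : ℕ) (h : 0 < t) (h' : t = S.len i) :
    S.pt i t = S.ext (S.dst i) := by
  rw [PathSys.pt_ext _ _ _ (by omega), if_neg (by omega)]

/-- An edge of a path leaving the left side. -/
theorem leave {n d ℓ p q : ℕ} (hℓ : 1 ≤ ℓ) {l r : Fin n → Fin d → Fin 2}
    (i : Idx n d l r) (s t : ℕ) (hs : s ≤ (sys n d l r ℓ p q).len i)
    (ht : t ≤ (sys n d l r ℓ p q).len i) (hst : t = s + 1 ∨ s = t + 1)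
    (h1 : LeftV hℓ ((sys n d l r ℓ p q).pt i s)) (h2 : ¬ LeftV hℓ ((sys n d l r ℓ p q).pt i t)) :
    (q = 0 ∧ ∃ k, (sys n d l r ℓ p q).pt i s = (sys n d l r ℓ p q).ext (.wR k)) ∨
    (p + q = 0 ∧ (sys n d l r ℓ p q).pt i s = (sys n d l r ℓ p q).ext .yR) ∨
    ((i = .yy ∨ ∃ k, i = .ww k) ∧ s = 0 ∧ t = 1) := by
  rw [LeftV_pt hℓ i s hs] at h1
  rw [LeftV_pt hℓ i t ht] at h2
  have e0 : s = 0 → (sys n d l r ℓ p q).pt i s =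
      (sys n d l r ℓ p q).ext ((sys n d l r ℓ p q).src i) := by
    rintro rfl
    exact PathSys.pt_zero _ _
  have e1 := pt_end (sys n d l r ℓ p q) i s
  rcases h1 with ⟨a, b, c⟩ | ⟨a, c⟩ | ⟨a, b, c⟩
  · exfalso
    apply h2
    cases i <;> simp [sys, LeftE, LeftI] at * <;> omega
  · specialize e0 a
    rw [e0]
    clear e0 e1
    cases i <;> simp [sys, LeftE, LeftI] at * <;> first | omega | exact Or.inl ⟨c, _, rfl⟩
  · specialize e1 a b
    rw [e1]
    clear e0 e1
    cases i <;> simp [sys, LeftE, LeftI] at * <;> first | omega | exact Or.inl ⟨c, _, rfl⟩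

theorem path_crosses_cut (n d ℓ p q : ℕ) (hn : 1 ≤ n) (hd : 1 ≤ d) (hℓ : 1 ≤ ℓ)
    (hp : p ≤ 1) (l r : Fin n → Fin d → Fin 2) :
    ∀ (i j : Fin n)
      (W : (sys n d l r ℓ p q).graph.Walk ((sys n d l r ℓ p q).ext (.uL i))
        ((sys n d l r ℓ p q).ext (.uR j))), W.IsPath →
      (sys n d l r ℓ p q).WalkContainsPath W .yy ∨
        ∃ k : Fin d, (sys n d l r ℓ p q).WalkContainsPath W (.ww k) := by
  classical
  intro i j W hW
  let S := sys n d l r ℓ p q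
  have hstart : LeftV hℓ (W.getVert 0) := by
    rw [W.getVert_zero]
    exact trivial
  have hend : ¬ LeftV hℓ (W.getVert W.length) := by
    rw [W.getVert_length]
    exact id
  obtain ⟨T, hT, hL, hR⟩ : ∃ T, T < W.length ∧ LeftV hℓ (W.getVert T) ∧
      ¬ LeftV hℓ (W.getVert (T + 1)) := by
    by_contra hcon
    push Not at hcon
    have : ∀ t, t ≤ W.length → LeftV hℓ (W.getVert t) := by
      intro t
      induction t with
      | zero => exact fun _ => hstart
      | succ t ih => exact fun ht => hcon t (by omega) (ih (by omega))
    exact hend (this _ le_rfl)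
  have hadj := W.adj_getVert_succ hT
  obtain ⟨a, s, t, hs, ht, hst, e1, e2⟩ : ∃ a s t, s ≤ S.len a ∧ t ≤ S.len a ∧
      (t = s + 1 ∨ s = t + 1) ∧ W.getVert T = S.pt a s ∧ W.getVert (T + 1) = S.pt a t := by
    unfold PathSys.graph at hadj
    rw [SimpleGraph.fromRel_adj] at hadj
    obtain ⟨-, ⟨a, t, ht, e1, e2⟩ | ⟨a, t, ht, e1, e2⟩⟩ := hadj
    · exact ⟨a, t, t + 1, (Nat.le_succ t).trans ht, ht, Or.inl rfl, e1, e2⟩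
    · exact ⟨a, t + 1, t, ht, (Nat.le_succ t).trans ht, Or.inr rfl, e2, e1⟩
  rw [e1] at hL
  rw [e2] at hR
  rcases leave hℓ a s t hs ht hst hL hR with ⟨hq, k, h⟩ | ⟨hq, h⟩ | ⟨h, rfl, rfl⟩
  · exact Or.inr ⟨k, PathSys.contains_zero _ _ W T hT.le hq (e1.trans h)⟩
  · exact Or.inl (PathSys.contains_zero _ _ W T hT.le hq (e1.trans h))
  · have := PathSys.follow S a W hW T hT e1 e2 ht
    rcases h with rfl | ⟨k, rfl⟩
    · exact Or.inl this
    · exact Or.inr ⟨k, this⟩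

end GraphOV
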